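/- Second fundamental theorem of FC for the Hilfer fractional derivative: let 0 < α < 1, 0 < γ < 1 − α, and let f ∈ C_{-1}(0,∞) be such that I^{1−α−γ}_{0+} f is differentiable on (0,∞), has a finite limit at t = 0+, and d/dt (I^{1−α−γ}_{0+} f) belongs to C_{-1}(0,∞). Then for all t > 0, (I^α_{0+} (I^γ_{0+} d/dt (I^{1−α−γ}_{0+} f)))(t) = f(t) − (I^{1−α−γ}_{0+} f)(0) · h_{α+γ}(t), where (I^{1−α−γ}_{0+} f)(0) = lim_{s→0+} (I^{1−α−γ}_{0+} f)(s). -/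

import Mathlib

open Real Filter MeasureTheory intervalIntegral

/-- The Laplace convolution `(f * g)(t) = ∫_0^t f(t-τ) g(τ) dτ`. -/
noncomputable def lconv (f g : ℝ → ℝ) : ℝ → ℝ :=
  fun t => ∫ τ in (0:ℝ)..t, f (t - τ) * g τ

/-- The space `C_{-1}(0,∞)`: functions representable as `t^p f₁(t)` with `p > -1`
and `f₁` continuous on `[0,∞)`. -/
def CMinusOne (f : ℝ → ℝ) : Prop :=
  ∃ p : ℝ, p > -1 ∧ ∃ f₁ : ℝ → ℝ, ContinuousOn f₁ (Set.Ici 0) ∧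
    ∀ t > (0:ℝ), f t = t ^ p * f₁ t


/-- The power law kernel `h_μ(t) = t^{μ-1}/Γ(μ)`. -/
noncomputable def hpow (μ : ℝ) : ℝ → ℝ := fun t => t ^ (μ - 1) / Real.Gamma μ

/-- The Riemann–Liouville fractional integral of order `μ`:
`(I^μ_{0+} f)(t) = ∫_0^t h_μ(t−τ) f(τ) dτ`. -/
noncomputable def rlInt (μ : ℝ) (f : ℝ → ℝ) : ℝ → ℝ := lconv (hpow μ) f

/-! The space `C_{-1}(0,∞)` is closed under the Laplace convolution, which is associative on it, and
`h_α * h_β = h_{α+β}` by Euler's beta integral; hence `I^α I^β = I^{α+β}` on `C_{-1}(0,∞)`.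

Write `β = α + γ`, `δ = 1 - β` and `F = I^δ f`. By the fundamental theorem of calculus
`I^1 F' = F - c h_1`, so applying `I^β` gives
`I^1 (I^β F') = I^β I^δ f - c I^β h_1 = I^1 (f - c h_β)`.
Since `I^1` is injective on `C_{-1}(0,∞)`, `I^α (I^γ F') = I^β F' = f - c h_β`. -/

open Set
open scoped Convolution Interval Topology

theorem continuous_intervalIntegral_smul {X E : Type*} [TopologicalSpace X]
    [FirstCountableTopology X] [WeaklyLocallyCompactSpace X] [NormedAddCommGroup E]
    [NormedSpace ℝ E] {μ : Measure ℝ} {a b : ℝ} {k : ℝ → ℝ} {G : X → ℝ → E}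
    (hk : IntervalIntegrable k μ a b)
    (hG : Continuous (Function.uncurry G)) :
    Continuous fun x => ∫ u in a..b, k u • G x u ∂μ := by
  refine continuous_iff_continuousAt.2 fun x₀ => ?_
  obtain ⟨K, hK, hKx₀⟩ := exists_compact_mem_nhds x₀
  obtain ⟨M, hM⟩ := (hK.prod isCompact_uIcc).exists_bound_of_continuousOn
    (hG.continuousOn (s := K ×ˢ [[a, b]]))
  refine continuousAt_of_dominated_interval (bound := fun u => ‖k u‖ * M)
    (.of_forall fun x => ?_) ?_ (hk.norm.mul_const M) (.of_forall fun u _ => ?_)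
  · exact hk.aestronglyMeasurable_restrict_uIoc.smul
      (hG.comp (Continuous.prodMk_right x)).aestronglyMeasurable
  · filter_upwards [hKx₀] with x hx
    refine .of_forall fun u hu => ?_
    rw [norm_smul]
    exact mul_le_mul_of_nonneg_left (hM (x, u) ⟨hx, uIoc_subset_uIcc hu⟩) (norm_nonneg _)
  · exact (continuous_const.smul (hG.comp (Continuous.prodMk_left u))).continuousAt

theorem eqOn_Ioi_of_integral_eq {E : Type*} [NormedAddCommGroup E] [NormedSpace ℝ E]
    [CompleteSpace E] {f g : ℝ → E} {a : ℝ}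
    (hf : ContinuousOn f (Ioi a)) (hg : ContinuousOn g (Ioi a))
    (hfi : ∀ t > a, IntervalIntegrable f volume a t)
    (hgi : ∀ t > a, IntervalIntegrable g volume a t)
    (h : ∀ t > a, ∫ s in a..t, f s = ∫ s in a..t, g s) : EqOn f g (Ioi a) := by
  intro t ht
  have hasDerivAt_primitive {k : ℝ → E} (hk : ContinuousOn k (Ioi a))
      (hki : IntervalIntegrable k volume a t) : HasDerivAt (fun u => ∫ s in a..u, k s) (k t) t :=
    integral_hasDerivAt_right hki (hk.stronglyMeasurableAtFilter isOpen_Ioi t ht)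
      (hk.continuousAt (Ioi_mem_nhds ht))
  have hfg : (fun u => ∫ s in a..u, f s) =ᶠ[𝓝 t] fun u => ∫ s in a..u, g s := by
    filter_upwards [Ioi_mem_nhds ht] with u hu using h u hu
  exact ((hasDerivAt_primitive hf (hfi t ht)).congr_of_eventuallyEq hfg.symm).unique
    (hasDerivAt_primitive hg (hgi t ht))

section BetaIntegral

variable {p q t : ℝ}

theorem integral_sub_rpow_mul_rpow (hp : -1 < p) (hq : -1 < q) (ht : 0 < t) :
    ∫ u in (0 : ℝ)..t, (t - u) ^ p * u ^ q =
      t ^ (p + q + 1) * ProbabilityTheory.beta (q + 1) (p + 1) := by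
  have hbeta : Complex.betaIntegral ((q + 1 : ℝ) : ℂ) ((p + 1 : ℝ) : ℂ) =
      ProbabilityTheory.beta (q + 1) (p + 1) := by
    rw [Complex.betaIntegral_eq_Gamma_mul_div _ _ (by simp; linarith) (by simp; linarith),
      ← Complex.ofReal_add]
    simp only [Complex.Gamma_ofReal, ProbabilityTheory.beta, Complex.ofReal_mul,
      Complex.ofReal_div]
  have hscaled := Complex.betaIntegral_scaled ((q + 1 : ℝ) : ℂ) ((p + 1 : ℝ) : ℂ) ht
  rw [hbeta] at hscaled
  rw [← Complex.ofReal_inj, ← intervalIntegral.integral_ofReal, Complex.ofReal_mul,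
    Complex.ofReal_cpow ht.le]
  convert! hscaled using 1
  · refine integral_congr fun u hu => ?_
    rw [uIcc_of_le ht.le] at hu
    simp [Complex.ofReal_cpow hu.1, Complex.ofReal_cpow (sub_nonneg.2 hu.2), mul_comm]
  · congr 2
    push_cast
    ring

theorem intervalIntegrable_sub_rpow_mul_rpow (hp : -1 < p) (hq : -1 < q) (ht : 0 < t) :
    IntervalIntegrable (fun u => (t - u) ^ p * u ^ q) volume 0 t := by
  refine intervalIntegrable_of_integral_ne_zero ?_
  rw [integral_sub_rpow_mul_rpow hp hq ht]
  exact mul_ne_zero (rpow_pos_of_pos ht _).ne'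
    (ProbabilityTheory.beta_pos (by linarith) (by linarith)).ne'

end BetaIntegral

namespace CMinusOne

variable {f g : ℝ → ℝ}

theorem exists_continuous (hf : CMinusOne f) :
    ∃ p : ℝ, p > -1 ∧ ∃ f₁ : ℝ → ℝ, Continuous f₁ ∧ ∀ t > 0, f t = t ^ p * f₁ t := by
  obtain ⟨p, hp, f₁, hf₁, hff₁⟩ := hf
  refine ⟨p, hp, fun t => f₁ (max 0 t), ?_, fun t ht => ?_⟩
  · exact hf₁.comp_continuous (by fun_prop) fun t => le_max_left 0 t
  · simp only [hff₁ t ht, max_eq_right ht.le]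

theorem continuousOn (hf : CMinusOne f) : ContinuousOn f (Ioi 0) := by
  obtain ⟨p, -, f₁, hf₁, hff₁⟩ := hf.exists_continuous
  have hcont : ContinuousOn (fun t => t ^ p * f₁ t) (Ioi 0) :=
    (continuousOn_id.rpow_const fun t ht => Or.inl (ne_of_gt ht)).mul hf₁.continuousOn
  exact hcont.congr hff₁

theorem aestronglyMeasurable_indicator (hf : CMinusOne f) :
    AEStronglyMeasurable ((Ioi 0).indicator f) :=
  (aestronglyMeasurable_indicator_iff measurableSet_Ioi).2
    (hf.continuousOn.aestronglyMeasurable measurableSet_Ioi)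

theorem norm (hf : CMinusOne f) : CMinusOne fun t => ‖f t‖ := by
  obtain ⟨p, hp, f₁, hf₁, hff₁⟩ := hf
  refine ⟨p, hp, fun t => ‖f₁ t‖, hf₁.norm, fun t ht => ?_⟩
  simp only [hff₁ t ht, norm_mul, norm_of_nonneg (rpow_nonneg ht.le p)]

theorem const_smul (hf : CMinusOne f) (c : ℝ) : CMinusOne (c • f) := by
  obtain ⟨p, hp, f₁, hf₁, hff₁⟩ := hf
  refine ⟨p, hp, c • f₁, hf₁.const_smul c, fun t ht => ?_⟩
  simp only [Pi.smul_apply, smul_eq_mul, hff₁ t ht, mul_left_comm]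

theorem add (hf : CMinusOne f) (hg : CMinusOne g) : CMinusOne (f + g) := by
  obtain ⟨p, hp, f₁, hf₁, hff₁⟩ := id hf
  obtain ⟨q, hq, g₁, hg₁, hgg₁⟩ := id hg
  wlog hpq : p ≤ q generalizing f g p q f₁ g₁
  · rw [add_comm]
    exact this hg hf q hq g₁ hg₁ hgg₁ p hp f₁ hf₁ hff₁ (le_of_not_ge hpq)
  refine ⟨p, hp, fun t => f₁ t + t ^ (q - p) * g₁ t, ?_, fun t ht => ?_⟩
  · exact hf₁.add ((continuous_rpow_const (sub_nonneg.2 hpq)).continuousOn.mul hg₁)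
  · rw [Pi.add_apply, hff₁ t ht, hgg₁ t ht, mul_add, ← mul_assoc, ← rpow_add ht, add_sub_cancel]

theorem sub (hf : CMinusOne f) (hg : CMinusOne g) : CMinusOne (f - g) := by
  simpa only [sub_eq_add_neg, neg_one_smul] using hf.add (hg.const_smul (-1))

theorem intervalIntegrable_comp_sub_mul (hf : CMinusOne f) (hg : CMinusOne g) {t : ℝ}
    (ht : 0 < t) : IntervalIntegrable (fun s => f (t - s) * g s) volume 0 t := by
  obtain ⟨p, hp, f₁, hf₁, hff₁⟩ := hf.exists_continuous
  obtain ⟨q, hq, g₁, hg₁, hgg₁⟩ := hg.exists_continuous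
  have hint : IntervalIntegrable (fun s => (t - s) ^ p * s ^ q * (f₁ (t - s) * g₁ s)) volume 0 t :=
    (intervalIntegrable_sub_rpow_mul_rpow hp hq ht).mul_continuousOn
      (g := fun s => f₁ (t - s) * g₁ s) (by fun_prop)
  rw [intervalIntegrable_iff_integrableOn_Ioo_of_le ht.le] at hint ⊢
  refine hint.congr_fun (fun s hs => ?_) measurableSet_Ioo
  simp only [hff₁ _ (sub_pos.2 hs.2), hgg₁ s hs.1, mul_mul_mul_comm]

theorem convolutionExists_indicator (hf : CMinusOne f) (hg : CMinusOne g) :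
    ConvolutionExists ((Ioi 0).indicator f) ((Ioi 0).indicator g)
      (ContinuousLinearMap.mul ℝ ℝ) := by
  intro t
  have hIoo : (fun s => (Ioi 0).indicator f s * (Ioi 0).indicator g (t - s)) =
      (Ioo 0 t).indicator fun s => g (t - s) * f s := by
    ext s
    by_cases hs : 0 < s <;> by_cases hst : s < t <;> simp [hs, hst, mul_comm]
  simp only [ConvolutionExistsAt, ContinuousLinearMap.mul_apply', hIoo,
    integrable_indicator_iff measurableSet_Ioo]
  rcases le_or_gt t 0 with ht | ht
  · simp [Ioo_eq_empty_of_le ht]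
  · exact (intervalIntegrable_iff_integrableOn_Ioo_of_le ht.le).1
      (hg.intervalIntegrable_comp_sub_mul hf ht)

end CMinusOne

section LaplaceConvolution

variable {f f' g g' h : ℝ → ℝ} {t : ℝ}

theorem lconv_congr (ht : 0 ≤ t) (hf : EqOn f f' (Ioo 0 t)) (hg : EqOn g g' (Ioo 0 t)) :
    lconv f g t = lconv f' g' t := by
  refine integral_congr_Ioo_of_le ht fun s hs => ?_
  simp only [hf (x := t - s) ⟨sub_pos.2 hs.2, sub_lt_self t hs.1⟩, hg hs]

theorem lconv_eq_mul_integral (f g : ℝ → ℝ) (t : ℝ) :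
    lconv f g t = t * ∫ u in (0 : ℝ)..1, f (t * (1 - u)) * g (t * u) := by
  simpa [lconv, mul_sub] using
    (mul_integral_comp_mul_left (a := 0) (b := 1) (f := fun s => f (t - s) * g s) t).symm

theorem indicator_lconv (f g : ℝ → ℝ) :
    (Ioi 0).indicator (lconv f g) =
      (Ioi 0).indicator f ⋆[ContinuousLinearMap.mul ℝ ℝ] (Ioi 0).indicator g := by
  have hlconv : lconv f g = fun t => ∫ s in (0 : ℝ)..t, g s * f (t - s) := by
    ext t
    simp only [lconv, mul_comm]
  rw [← convolution_flip, ContinuousLinearMap.flip_mul,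
    ← posConvolution_eq_convolution_indicator g f _ volume, hlconv]
  rfl

theorem CMinusOne.lconv (hf : CMinusOne f) (hg : CMinusOne g) : CMinusOne (lconv f g) := by
  obtain ⟨p, hp, f₁, hf₁, hff₁⟩ := hf.exists_continuous
  obtain ⟨q, hq, g₁, hg₁, hgg₁⟩ := hg.exists_continuous
  refine ⟨p + q + 1, by linarith,
    fun t => ∫ u in (0 : ℝ)..1, (1 - u) ^ p * u ^ q * (f₁ (t * (1 - u)) * g₁ (t * u)), ?_,
    fun t ht => ?_⟩
  · have hG : Continuous (Function.uncurry fun t u => f₁ (t * (1 - u)) * g₁ (t * u)) := by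
      fun_prop
    exact (continuous_intervalIntegral_smul
      (intervalIntegrable_sub_rpow_mul_rpow hp hq one_pos) hG).continuousOn
  · rw [lconv_eq_mul_integral, ← intervalIntegral.integral_const_mul,
      ← intervalIntegral.integral_const_mul]
    refine integral_congr_Ioo_of_le zero_le_one fun u hu => ?_
    have hu' : 0 < 1 - u := sub_pos.2 hu.2
    simp only [hff₁ _ (mul_pos ht hu'), hgg₁ _ (mul_pos ht hu.1), mul_rpow ht.le hu'.le,
      mul_rpow ht.le hu.1.le, rpow_add ht, rpow_one]
    ring

theorem lconv_assoc (hf : CMinusOne f) (hg : CMinusOne g) (hh : CMinusOne h) (ht : 0 < t) :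
    lconv (lconv f g) h t = lconv f (lconv g h) t := by
  have lconv_eq (k l : ℝ → ℝ) : lconv k l t =
      ((Ioi 0).indicator k ⋆[ContinuousLinearMap.mul ℝ ℝ] (Ioi 0).indicator l) t := by
    rw [← indicator_lconv, indicator_of_mem (mem_Ioi.2 ht)]
  rw [lconv_eq, lconv_eq, indicator_lconv, indicator_lconv]
  refine convolution_assoc _ _ _ _ mul_assoc hf.aestronglyMeasurable_indicator
    hg.aestronglyMeasurable_indicator hh.aestronglyMeasurable_indicator
    (.of_forall (hf.convolutionExists_indicator hg)) ?_ ?_ <;>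
    simp only [norm_indicator_eq_indicator_norm]
  · exact .of_forall (hg.norm.convolutionExists_indicator hh.norm)
  · rw [← indicator_lconv]
    exact hf.norm.convolutionExists_indicator (hg.norm.lconv hh.norm) t

end LaplaceConvolution

section PowerKernel

variable {μ ν : ℝ}

theorem hpow_one : hpow 1 = 1 := by
  ext t
  simp [hpow]

theorem cMinusOne_hpow (hμ : 0 < μ) : CMinusOne (hpow μ) :=
  ⟨μ - 1, by linarith, fun _ => (Gamma μ)⁻¹, continuousOn_const, fun _ _ => div_eq_mul_inv _ _⟩

theorem rlInt_hpow (hμ : 0 < μ) (hν : 0 < ν) {t : ℝ} (ht : 0 < t) :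
    rlInt μ (hpow ν) t = hpow (μ + ν) t := by
  have hGμ := (Gamma_pos_of_pos hμ).ne'
  have hGν := (Gamma_pos_of_pos hν).ne'
  calc rlInt μ (hpow ν) t
      = (∫ s in (0 : ℝ)..t, (t - s) ^ (μ - 1) * s ^ (ν - 1)) / (Gamma μ * Gamma ν) := by
        simp only [rlInt, lconv, hpow, div_mul_div_comm, intervalIntegral.integral_div]
    _ = t ^ (μ + ν - 1) * ProbabilityTheory.beta ν μ / (Gamma μ * Gamma ν) := by
        rw [integral_sub_rpow_mul_rpow (by linarith) (by linarith) ht]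
        ring_nf
    _ = hpow (μ + ν) t := by
        rw [ProbabilityTheory.beta, hpow, add_comm ν μ]
        field_simp

end PowerKernel

section RiemannLiouville

variable {f g : ℝ → ℝ} {μ ν t : ℝ}

theorem rlInt_one (f : ℝ → ℝ) (t : ℝ) : rlInt 1 f t = ∫ s in (0 : ℝ)..t, f s := by
  simp [rlInt, lconv, hpow_one]

theorem rlInt_const_smul (μ c : ℝ) (f : ℝ → ℝ) : rlInt μ (c • f) = c • rlInt μ f := by
  ext t
  simp only [rlInt, lconv, Pi.smul_apply, smul_eq_mul, mul_left_comm,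
    intervalIntegral.integral_const_mul]

theorem rlInt_sub (hf : CMinusOne f) (hg : CMinusOne g) (hμ : 0 < μ) (ht : 0 < t) :
    rlInt μ (f - g) t = rlInt μ f t - rlInt μ g t := by
  simp only [rlInt, lconv, Pi.sub_apply, mul_sub]
  exact intervalIntegral.integral_sub
    ((cMinusOne_hpow hμ).intervalIntegrable_comp_sub_mul hf ht)
    ((cMinusOne_hpow hμ).intervalIntegrable_comp_sub_mul hg ht)

theorem rlInt_sub_const_smul_hpow (hf : CMinusOne f) (c : ℝ) (hμ : 0 < μ) (hν : 0 < ν)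
    (ht : 0 < t) : rlInt μ (f - c • hpow ν) t = rlInt μ f t - c * hpow (μ + ν) t := by
  rw [rlInt_sub hf ((cMinusOne_hpow hν).const_smul c) hμ ht, rlInt_const_smul, Pi.smul_apply,
    smul_eq_mul, rlInt_hpow hμ hν ht]

theorem CMinusOne.rlInt (hf : CMinusOne f) (hμ : 0 < μ) : CMinusOne (rlInt μ f) :=
  (cMinusOne_hpow hμ).lconv hf

theorem CMinusOne.intervalIntegrable (hf : CMinusOne f) (ht : 0 < t) :
    IntervalIntegrable f volume 0 t := by
  simpa [hpow_one] using (cMinusOne_hpow one_pos).intervalIntegrable_comp_sub_mul hf ht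

theorem rlInt_rlInt (hf : CMinusOne f) (hμ : 0 < μ) (hν : 0 < ν) (ht : 0 < t) :
    rlInt μ (rlInt ν f) t = rlInt (μ + ν) f t := by
  rw [rlInt, rlInt, ← lconv_assoc (cMinusOne_hpow hμ) (cMinusOne_hpow hν) hf ht]
  exact lconv_congr ht.le (fun s hs => rlInt_hpow hμ hν hs.1) (eqOn_refl f _)

theorem eqOn_of_rlInt_one_eqOn (hf : CMinusOne f) (hg : CMinusOne g)
    (h : EqOn (rlInt 1 f) (rlInt 1 g) (Ioi 0)) : EqOn f g (Ioi 0) :=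
  eqOn_Ioi_of_integral_eq hf.continuousOn hg.continuousOn (fun _ => hf.intervalIntegrable)
    (fun _ => hg.intervalIntegrable) fun t ht => by simpa only [rlInt_one] using h ht

theorem rlInt_one_deriv {F : ℝ → ℝ} {c : ℝ} (hdiff : ∀ s > 0, DifferentiableAt ℝ F s)
    (hlim : Tendsto F (𝓝[>] 0) (𝓝 c)) (hder : CMinusOne (deriv F)) (ht : 0 < t) :
    rlInt 1 (deriv F) t = F t - c := by
  rw [rlInt_one]
  exact integral_eq_sub_of_hasDerivAt_of_tendsto ht (fun s hs => (hdiff s hs.1).hasDerivAt)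
    (hder.intervalIntegrable ht) hlim
    ((hdiff t ht).continuousAt.tendsto.mono_left nhdsWithin_le_nhds)

theorem rlInt_deriv_rlInt {β δ c : ℝ} (hβ : 0 < β) (hδ : 0 < δ) (hβδ : β + δ = 1)
    (hf : CMinusOne f) (hdiff : ∀ s > 0, DifferentiableAt ℝ (rlInt δ f) s)
    (hlim : Tendsto (rlInt δ f) (𝓝[>] 0) (𝓝 c)) (hder : CMinusOne (deriv (rlInt δ f)))
    (ht : 0 < t) : rlInt β (deriv (rlInt δ f)) t = f t - c * hpow β t := by
  have hsub : CMinusOne (f - c • hpow β) := hf.sub ((cMinusOne_hpow hβ).const_smul c)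
  refine eqOn_of_rlInt_one_eqOn (hder.rlInt hβ) hsub (fun s hs => ?_) ht
  have hFTC : EqOn (rlInt 1 (deriv (rlInt δ f))) (rlInt δ f - c • hpow 1) (Ioo 0 s) := by
    intro r hr
    simp [rlInt_one_deriv hdiff hlim hder hr.1, hpow_one]
  calc rlInt 1 (rlInt β (deriv (rlInt δ f))) s
      = rlInt β (rlInt 1 (deriv (rlInt δ f))) s := by
        rw [rlInt_rlInt hder one_pos hβ hs, rlInt_rlInt hder hβ one_pos hs, add_comm]
    _ = rlInt β (rlInt δ f - c • hpow 1) s := lconv_congr (le_of_lt hs) (eqOn_refl _ _) hFTC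
    _ = rlInt 1 f s - c * hpow (1 + β) s := by
        rw [rlInt_sub_const_smul_hpow (hf.rlInt hδ) c hβ one_pos hs, rlInt_rlInt hf hβ hδ hs, hβδ,
          add_comm]
    _ = rlInt 1 (f - c • hpow β) s := (rlInt_sub_const_smul_hpow hf c one_pos hβ hs).symm

end RiemannLiouville

/-- Second fundamental theorem of FC for the Hilfer fractional derivative: for
`0 < α < 1`, `0 < γ < 1 − α`, and `f ∈ C_{-1}(0,∞)` such that `I^{1−α−γ}_{0+} f`
is differentiable on `(0,∞)`, has finite limit `c = (I^{1−α−γ}_{0+} f)(0)` at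
`0+`, and `d/dt (I^{1−α−γ}_{0+} f) ∈ C_{-1}(0,∞)`, one has
`(I^α_{0+} (I^γ_{0+} d/dt (I^{1−α−γ}_{0+} f)))(t) = f(t) − (I^{1−α−γ}_{0+} f)(0) h_{α+γ}(t)`
for all `t > 0`. -/
theorem second_fundamental_theorem_Hilfer (α γ : ℝ) (f : ℝ → ℝ) (c : ℝ)
    (hα : 0 < α) (hα1 : α < 1) (hγ : 0 < γ) (hγ1 : γ < 1 - α)
    (hf : CMinusOne f)
    (hdiff : ∀ t > (0:ℝ), DifferentiableAt ℝ (rlInt (1 - α - γ) f) t)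
    (hlim : Tendsto (rlInt (1 - α - γ) f) (nhdsWithin 0 (Set.Ioi 0)) (nhds c))
    (hder : CMinusOne (deriv (rlInt (1 - α - γ) f))) :
    ∀ t > (0:ℝ),
      rlInt α (rlInt γ (deriv (rlInt (1 - α - γ) f))) t =
        f t - c * hpow (α + γ) t := by
  intro t ht
  rw [rlInt_rlInt hder hα hγ ht]
  exact rlInt_deriv_rlInt (add_pos hα hγ) (by linarith) (by ring) hf hdiff hlim hder ht
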